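/- Let f : S_∞(2^{<ℕ}) → S_∞(2^{<ℕ}) be a Borel map and let [s, D] be a nonempty Ellentuck cube in S_∞(2^{<ℕ}). Then there exist B₀ ∈ [s, D] and n₀ ∈ ℕ such that for all n ≥ n₀ and all A, A' ∈ S_∞(2^{<ℕ}) with A ≤ B₀ and A' ≤ B₀ satisfying A ∩ B₀(n−1) = A' ∩ B₀(n−1) ≠ ∅, one has ⟨f(A)⟩ ∩ B₀(n−1) = ⟨f(A')⟩ ∩ B₀(n−1). -/

import Mathlib

/-- The `ℓ`-th splitting level (height) of a subset `A` of the full binary tree `2^{<ℕ}`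
(finite binary strings, modelled as `List Bool`): the `ℓ`-th smallest length of a member
of `A`. -/
noncomputable def levelOf (A : Set (List Bool)) (ℓ : ℕ) : ℕ :=
  Nat.nth (fun h => ∃ a ∈ A, a.length = h) ℓ

/-- `A` is an (infinite) strong subtree of `2^{<ℕ}`: there is a strictly increasing sequence
`k₀ < k₁ < ⋯` such that `A` is partitioned into its level sets `A(ℓ) = A ∩ 2^{k_ℓ}`,
`A(0)` is a singleton (the root), every `a ∈ A(ℓ)` and `i ∈ {0,1}` admit exactly one
`b ∈ A(ℓ+1)` extending `a⌢i`, and every member of `A(ℓ+1)` arises this way. -/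
def IsStrongSubtree (A : Set (List Bool)) : Prop :=
  ∃ k : ℕ → ℕ, StrictMono k ∧
    (∀ a ∈ A, ∃ ℓ, a.length = k ℓ) ∧
    (∃! a, a ∈ A ∧ a.length = k 0) ∧
    (∀ ℓ : ℕ, ∀ a ∈ A, a.length = k ℓ → ∀ i : Bool,
      ∃! b, b ∈ A ∧ b.length = k (ℓ + 1) ∧ (a ++ [i]) <+: b) ∧
    (∀ ℓ : ℕ, ∀ b ∈ A, b.length = k (ℓ + 1) →
      ∃ a ∈ A, a.length = k ℓ ∧ ∃ i : Bool, (a ++ [i]) <+: b)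

/-- The Milliken space `S_∞(2^{<ℕ})` of all strong subtrees of `2^{<ℕ}`, viewed as a subset of
the Polish space `2^{2^{<ℕ}}` with the induced Borel structure. -/
def Sinf : Type := {A : Set (List Bool) // IsStrongSubtree A}

instance : MeasurableSpace Sinf :=
  inferInstanceAs (MeasurableSpace {A : Set (List Bool) // IsStrongSubtree A})

/-- The finite approximation `r_n(A) = A(0) ∪ ⋯ ∪ A(n−1)`: members of `A` of height among
the first `n` levels of `A`. -/
noncomputable def approxT (A : Set (List Bool)) (n : ℕ) : Set (List Bool) :=
  {a ∈ A | ∃ ℓ < n, a.length = levelOf A ℓ}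

/-- `s ⊑ A`: `s = r_n(A)` for some `n`. -/
def InitSegT (s A : Set (List Bool)) : Prop := ∃ n, s = approxT A n

/-- The Ellentuck cube `[s, A] = {B ∈ S_∞(2^{<ℕ}) : s ⊑ B and B ⊆ A}`. -/
def cubeT (s : Set (List Bool)) (A : Sinf) : Set Sinf :=
  {B | InitSegT s B.1 ∧ B.1 ⊆ A.1}

/-- `𝓧 ⊆ S_∞(2^{<ℕ})` is Ramsey null. -/
def RamseyNullT (X : Set Sinf) : Prop :=
  ∀ s A, (cubeT s A).Nonempty → ∃ B ∈ cubeT s A, cubeT s B ∩ X = ∅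

/-- `𝓧 ⊆ S_∞(2^{<ℕ})` is Ramsey conull. -/
def RamseyConullT (X : Set Sinf) : Prop := RamseyNullT Xᶜ

/-- The `ℓ`-th level set `A(ℓ)` of `A ⊆ 2^{<ℕ}`: members of `A` of the `ℓ`-th height. -/
noncomputable def lvlSet (A : Set (List Bool)) (ℓ : ℕ) : Set (List Bool) :=
  {a ∈ A | a.length = levelOf A ℓ}

/-- `⟨A⟩`: all `b ∈ 2^{<ℕ}` extended by some member of `A`. -/
def below (A : Set (List Bool)) : Set (List Bool) := {b | ∃ a ∈ A, b <+: a}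

/-!
Strong subtrees of `2^{<ℕ}` are exactly the ranges of strong embeddings `e`, and `e'` has its range
in that of `e` just when `e' = e * g` for some strong embedding `g`. In this monoid the
neighbourhood of `e` at level `k` is `e * fix k`, where `fix k` consists of the embeddings that are
the identity below level `k`. The pigeonhole principle for level `k` is the Carlson–Simpson
theorem, proved with idempotent ultrafilters, so the Galvin–Prikry–Ellentuck argument shows that
every Borel set of strong subtrees is completely Ramsey.

Given `f` and `[s, D]`, a fusion yields `B₀ = range e` such that, for all large `n`, every `b` with
`|b| ≤ n` and each of the finitely many `h` which send some level `k ≤ n + 1` to level `n + 1` and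
make no choices above it, `e * h * fix k` decides whether `e b ∈ ⟨f(A)⟩`. A strong subtree is
determined, up to and including a level it meets, by its intersection with that level. Hence if `A`
and `A'` have the same nonempty intersection with a level of `B₀`, they lie in a common such
neighbourhood, and `f(A)` and `f(A')` receive the same decisions.
-/

/-- A monoid of self-embeddings whose right multiples carry the structure of a topological Ramsey
space: the point `x` stands for the substructure it parametrises, and `x * fix k` for the basic
Ellentuck neighbourhood of the points below `x` that agree with `x` up to level `k`. -/
class RamseyMonoid (M : Type*) [Monoid M] where
  /-- The embeddings that are the identity below level `k`. -/
  fix : ℕ → Submonoid M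
  /-- The embeddings that send level `k` into level `m` and make no choices above level `k`. -/
  tight : ℕ → ℕ → Set M
  fix_antitone : Antitone fix
  finite_tight (k m : ℕ) : (tight k m).Finite
  exists_mul_eq_tight_mul {k m : ℕ} {h g : M} :
    h ∈ tight k m → g ∈ fix m → ∃ g' ∈ fix k, g * h = h * g'
  exists_mul_tight_eq {k m : ℕ} {h g : M} :
    h ∈ tight k m → g ∈ fix k → ∃ g' ∈ fix m, g' * h = h * g
  exists_eq_tight_mul (g : M) (k : ℕ) : ∃ m ≥ k, ∃ h ∈ tight k m, ∃ g' ∈ fix k, g = h * g'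
  exists_limit (n : ℕ) (E : ℕ → M) :
    (∀ j, ∃ g ∈ fix (n + j), E (j + 1) = E j * g) → ∃ x, ∀ j, ∃ g ∈ fix (n + j), x = E j * g
  pigeonhole (k : ℕ) (O : Set M) :
    (∀ g ∈ fix k, ∀ g' ∈ fix (k + 1), g ∈ O ↔ g * g' ∈ O) →
      ∃ g ∈ fix k, (∀ g' ∈ fix k, g * g' ∈ O) ∨ (∀ g' ∈ fix k, g * g' ∉ O)

namespace RamseyMonoid

variable {M : Type*} [Monoid M] [RamseyMonoid M] {X : Set M} {k m n : ℕ} {x g : M}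

/-- Galvin–Prikry acceptance: the neighbourhood `x * fix k` lies in `X`. -/
def Accepts (X : Set M) (k : ℕ) (x : M) : Prop := ∀ g ∈ fix k, x * g ∈ X

/-- Galvin–Prikry rejection: no smaller neighbourhood of the same level accepts `X`. -/
def Rejects (X : Set M) (k : ℕ) (x : M) : Prop := ∀ g ∈ fix k, ¬Accepts X k (x * g)

/-- The neighbourhood `x * fix k` is homogeneous for `X`. -/
def Decides (X : Set M) (k : ℕ) (x : M) : Prop := Accepts X k x ∨ Accepts Xᶜ k x

/-- The completely Ramsey sets of the topological Ramsey space `M`. -/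
def CompletelyRamsey (X : Set M) : Prop := ∀ k x, ∃ g ∈ fix k, Decides X k (x * g)

/-- Openness in the Ellentuck topology, generated by the neighbourhoods `x * fix k`. -/
def EllentuckOpen (X : Set M) : Prop := ∀ x ∈ X, ∃ k, Accepts X k x

/-- The properties that a fusion sequence can secure at level `k`. -/
structure DenseHereditary (k : ℕ) (P : M → Prop) : Prop where
  dense (x : M) : ∃ g ∈ fix k, P (x * g)
  hereditary {x g : M} : P x → g ∈ fix k → P (x * g)

theorem Accepts.mul (h : Accepts X k x) (hg : g ∈ fix k) : Accepts X k (x * g) :=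
  fun g' hg' => mul_assoc x g g' ▸ h _ (mul_mem hg hg')

theorem Accepts.mem (h : Accepts X k x) : x ∈ X := mul_one x ▸ h 1 (one_mem _)

theorem Accepts.mono (h : Accepts X k x) (hkm : k ≤ m) : Accepts X m x :=
  fun g hg => h g (fix_antitone hkm hg)

theorem Rejects.mul (h : Rejects X k x) (hg : g ∈ fix k) : Rejects X k (x * g) :=
  fun g' hg' => mul_assoc x g g' ▸ h _ (mul_mem hg hg')

theorem Rejects.not_accepts (h : Rejects X k x) : ¬Accepts X k x :=
  mul_one x ▸ h 1 (one_mem _)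

theorem Decides.mul (h : Decides X k x) (hg : g ∈ fix k) : Decides X k (x * g) :=
  h.imp (·.mul hg) (·.mul hg)

theorem Decides.accepts_of_mem (h : Decides X k x) (hx : x ∈ X) : Accepts X k x :=
  h.resolve_right fun h' => h'.mem hx

theorem Decides.mem_iff (h : Decides X k x) {g' : M} (hg : g ∈ fix k) (hg' : g' ∈ fix k) :
    x * g ∈ X ↔ x * g' ∈ X := by
  rcases h with h | h
  · exact iff_of_true (h g hg) (h g' hg')
  · exact iff_of_false (h g hg) (h g' hg')

theorem CompletelyRamsey.denseHereditary (hX : CompletelyRamsey X) (k : ℕ) :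
    DenseHereditary k (Decides X k) :=
  ⟨hX k, .mul⟩

namespace DenseHereditary

theorem mul_tight {P : M → Prop} (hP : DenseHereditary k P) {h : M} (hh : h ∈ tight k m) :
    DenseHereditary m (fun x => P (x * h)) where
  dense x := by
    obtain ⟨g, hg, hPg⟩ := hP.dense (x * h)
    obtain ⟨g', hg', heq⟩ := exists_mul_tight_eq hh hg
    exact ⟨g', hg', by rwa [mul_assoc, heq, ← mul_assoc]⟩
  hereditary {x g} hx hg := by
    obtain ⟨g', hg', heq⟩ := exists_mul_eq_tight_mul hh hg
    rw [mul_assoc, heq, ← mul_assoc]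
    exact hP.hereditary hx hg'

theorem forall_mem {ι : Type*} {S : Set ι} (hS : S.Finite) {P : ι → M → Prop}
    (hP : ∀ i ∈ S, DenseHereditary k (P i)) : DenseHereditary k (fun x => ∀ i ∈ S, P i x) where
  dense x := by
    induction S, hS using Set.Finite.induction_on with
    | empty => exact ⟨1, one_mem _, by simp⟩
    | @insert a S _ _ ih =>
      rw [Set.forall_mem_insert] at hP
      obtain ⟨g, hg, hS⟩ := ih hP.2
      obtain ⟨g', hg', ha⟩ := hP.1.dense (x * g)
      refine ⟨g * g', mul_mem hg hg', ?_⟩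
      rw [← mul_assoc, Set.forall_mem_insert]
      exact ⟨ha, fun i hi => (hP.2 i hi).hereditary (hS i hi) hg'⟩
  hereditary hx hg i hi := (hP i hi).hereditary (hx i hi) hg

theorem forall_tight {P : M → Prop} (hP : DenseHereditary k P) (m : ℕ) :
    DenseHereditary m (fun x => ∀ h ∈ tight k m, P (x * h)) :=
  forall_mem (finite_tight k m) fun _ hh => hP.mul_tight hh

end DenseHereditary

theorem exists_fusion {P : ℕ → M → Prop} (hP : ∀ m ≥ n, DenseHereditary m (P m)) (x : M) :
    ∃ g ∈ fix n, ∀ m ≥ n, P m (x * g) := by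
  choose pick hpick hP_pick using fun j => (hP (n + j) le_self_add).dense
  let E : ℕ → M := Nat.rec x fun j y => y * pick j y
  obtain ⟨G, hG⟩ := exists_limit n E fun j => ⟨pick j (E j), hpick j (E j), rfl⟩
  obtain ⟨g, hg, rfl⟩ := hG 0
  refine ⟨g, hg, fun m hm => ?_⟩
  obtain ⟨j, rfl⟩ := Nat.exists_eq_add_of_le hm
  obtain ⟨g', hg', heq⟩ := hG (j + 1)
  rw [show x * g = E (j + 1) * g' from heq]
  exact (hP _ hm).hereditary (hP_pick j (E j)) (fix_antitone (Nat.le_succ _) hg')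

theorem exists_fusion_forall {P : ℕ → M → Prop} (hP : ∀ k ≥ n, DenseHereditary k (P k)) (x : M) :
    ∃ g ∈ fix n, ∀ k ≥ n, ∀ y, P k (x * g * y) := by
  obtain ⟨g, hg, h⟩ := exists_fusion (n := n)
    (fun m _ => DenseHereditary.forall_mem (Set.finite_Icc n m) fun k hk =>
      (hP k hk.1).forall_tight m) x
  refine ⟨g, hg, fun k hk y => ?_⟩
  obtain ⟨m, hkm, t, ht, g', hg', rfl⟩ := exists_eq_tight_mul y k
  rw [← mul_assoc]
  exact (hP k hk).hereditary (h m (hk.trans hkm) k ⟨hk, hkm⟩ t ht) hg'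

theorem denseHereditary_accepts_or_rejects (X : Set M) (k : ℕ) :
    DenseHereditary k (fun x => Accepts X k x ∨ Rejects X k x) where
  dense x := by
    by_cases hx : Rejects X k x
    · exact ⟨1, one_mem _, by rw [mul_one]; exact .inr hx⟩
    · simp only [Rejects, not_forall, not_not] at hx
      obtain ⟨g, hg, hacc⟩ := hx
      exact ⟨g, hg, .inl hacc⟩
  hereditary h hg := h.imp (·.mul hg) (·.mul hg)

theorem denseHereditary_accepts_or_forall_rejects_succ
    (h : ∀ y, Accepts X (k + 1) (x * y) ∨ Rejects X (k + 1) (x * y)) :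
    DenseHereditary k
      (fun y => Accepts X k (x * y) ∨ ∀ g ∈ fix k, Rejects X (k + 1) (x * y * g)) where
  dense y := by
    obtain ⟨g, hg, hhom⟩ := pigeonhole k {g | Accepts X (k + 1) (x * y * g)} fun g _ g' hg' => by
      simp only [Set.mem_ofPred_eq, ← mul_assoc]
      refine ⟨(·.mul hg'), fun hacc => ?_⟩
      have := h (y * g)
      simp only [← mul_assoc] at this
      exact this.resolve_right fun hrej => hrej g' hg' hacc
    simp only [Set.mem_ofPred_eq, ← mul_assoc] at hhom
    simp only [← mul_assoc]
    refine ⟨g, hg, hhom.imp (fun hacc g' hg' => (hacc g' hg').mem) fun hacc g' hg' => ?_⟩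
    have := h (y * g * g')
    simp only [← mul_assoc] at this
    exact this.resolve_left (hacc g' hg')
  hereditary {y g} hy hg := by
    simp only [← mul_assoc]
    refine hy.imp (·.mul hg) fun hrej g' hg' => ?_
    rw [mul_assoc]
    exact hrej _ (mul_mem hg hg')

theorem Rejects.exists_forall_rejects
    (h : ∀ k ≥ n, ∀ y, Accepts X k (x * y) ∨ Rejects X k (x * y)) (hx : Rejects X n x) :
    ∃ g ∈ fix n, ∀ g' ∈ fix n, ∀ k ≥ n, Rejects X k (x * g * g') := by
  obtain ⟨g, hg, hstep⟩ := exists_fusion_forall (n := n)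
    (fun k hk => denseHereditary_accepts_or_forall_rejects_succ (h (k + 1) (Nat.le_succ_of_le hk)))
    1
  refine ⟨g, hg, fun g' hg' k hk => ?_⟩
  induction k, hk using Nat.le_induction with
  | base => exact (hx.mul hg).mul hg'
  | succ k hk ih =>
    have hstep := hstep k hk g'
    simp only [one_mul, ← mul_assoc] at hstep
    have hrej := hstep.resolve_left ih.not_accepts 1 (one_mem _)
    rwa [mul_one] at hrej

theorem EllentuckOpen.completelyRamsey (hX : EllentuckOpen X) : CompletelyRamsey X := by
  intro n x
  obtain ⟨g, hg, hdec⟩ := exists_fusion_forall (n := n)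
    (fun k _ => denseHereditary_accepts_or_rejects X k) x
  rcases hdec n le_rfl 1 with hacc | hrej
  · exact ⟨g, hg, .inl (by rwa [mul_one] at hacc)⟩
  rw [mul_one] at hrej
  obtain ⟨g', hg', hrej'⟩ := hrej.exists_forall_rejects hdec
  refine ⟨g * g', mul_mem hg hg', .inr fun y hy hmem => ?_⟩
  rw [← mul_assoc] at hmem
  obtain ⟨k, hk⟩ := hX _ hmem
  exact (hrej' y hy (max k n) (le_max_right k n)).not_accepts (hk.mono (le_max_left k n))

theorem completelyRamsey_empty : CompletelyRamsey (∅ : Set M) :=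
  fun _ _ => ⟨1, one_mem _, .inr fun _ _ => Set.notMem_empty _⟩

theorem CompletelyRamsey.compl (hX : CompletelyRamsey X) : CompletelyRamsey Xᶜ := fun k x =>
  (hX k x).imp fun _ h => ⟨h.1, h.2.symm.imp_right fun hacc => by rwa [compl_compl]⟩

theorem CompletelyRamsey.iUnion {X : ℕ → Set M} (hX : ∀ i, CompletelyRamsey (X i)) :
    CompletelyRamsey (⋃ i, X i) := by
  intro n x
  obtain ⟨g, hg, hdec⟩ := exists_fusion_forall (n := n) (fun k _ =>
    DenseHereditary.forall_mem (Set.finite_Iic k) fun i _ => (hX i).denseHereditary k) x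
  have hopen : EllentuckOpen {y | x * g * y ∈ ⋃ i, X i} := by
    intro y hy
    obtain ⟨i, hi⟩ := Set.mem_iUnion.1 hy
    refine ⟨max i n, fun g' hg' => Set.mem_iUnion.2 ⟨i, ?_⟩⟩
    rw [← mul_assoc]
    exact (hdec _ (le_max_right i n) y i (le_max_left i n)).accepts_of_mem hi g' hg'
  obtain ⟨g', hg', hdec'⟩ := hopen.completelyRamsey n 1
  refine ⟨g * g', mul_mem hg hg', hdec'.imp ?_ ?_⟩ <;>
    exact fun hacc y hy => by
      simpa only [one_mul, mul_assoc, Set.mem_compl_iff, Set.mem_ofPred_eq] using hacc y hy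

/-- The σ-algebra of completely Ramsey sets. -/
@[reducible] def measurableSpace : MeasurableSpace M where
  MeasurableSet' := CompletelyRamsey
  measurableSet_empty := completelyRamsey_empty
  measurableSet_compl _ := .compl
  measurableSet_iUnion _ := .iUnion

end RamseyMonoid

section CarlsonSimpson

theorem exists_forall_exists_mul_mul_eq_self {S : Type*} [Nonempty S] [Semigroup S]
    [TopologicalSpace S] [CompactSpace S] [T2Space S] (hcont : ∀ r : S, Continuous (· * r)) :
    ∃ p : S, ∀ y, ∃ z, z * (y * p) = p := by
  -- A minimal closed left ideal consists of such elements.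
  obtain ⟨L, hL⟩ : ∃ L : Set S,
      Minimal (fun L => IsClosed L ∧ L.Nonempty ∧ ∀ x, ∀ y ∈ L, x * y ∈ L) L := by
    refine zorn_superset {L : Set S | IsClosed L ∧ L.Nonempty ∧ ∀ x, ∀ y ∈ L, x * y ∈ L}
      fun c hcs hc => ⟨⋂₀ c, ⟨isClosed_sInter fun t ht => (hcs ht).1, ?_, fun x y hy t ht =>
        (hcs ht).2.2 x y (hy t ht)⟩, fun s hs => Set.sInter_subset_of_mem hs⟩
    obtain rfl | hne := c.eq_empty_or_nonempty
    · simp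
    · have := hne.to_subtype
      exact IsCompact.nonempty_sInter_of_directed_nonempty_isCompact_isClosed
        (IsChain.directedOn hc.symm) (fun t ht => (hcs ht).2.1)
        (fun t ht => (hcs ht).1.isCompact) fun t ht => (hcs ht).1
  obtain ⟨-, ⟨p, hp⟩, hmul⟩ := hL.prop
  refine ⟨p, fun y => ?_⟩
  refine hL.le_of_le (y := Set.range (· * (y * p))) ⟨(isCompact_range (hcont _)).isClosed,
    ⟨_, y, rfl⟩, ?_⟩ ?_ hp
  · rintro x _ ⟨z, rfl⟩
    exact ⟨x * z, mul_assoc x z _⟩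
  · rintro _ ⟨z, rfl⟩
    exact hmul z _ (hmul y p hp)

attribute [local instance] Ultrafilter.mul Ultrafilter.semigroup

theorem ultrafilter_map_mul {V W F : Type*} [Mul V] [Mul W] [FunLike F V W] [MulHomClass F V W]
    (f : F) (p q : Ultrafilter V) : (p * q).map f = p.map f * q.map f := by
  refine Ultrafilter.coe_inj.1 (Filter.ext' fun P => ?_)
  simp only [Ultrafilter.eventually_mul, Ultrafilter.coe_map, Filter.eventually_map, map_mul]

theorem mem_ultrafilter_mul_of_forall_mul_mem {V : Type*} [Mul V] {R : Set V}
    (hR : ∀ x ∈ R, ∀ y, x * y ∈ R) {p : Ultrafilter V} (hp : R ∈ p) (q : Ultrafilter V) :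
    R ∈ p * q := by
  change ∀ᶠ x in ((p * q : Ultrafilter V) : Filter V), x ∈ R
  rw [Ultrafilter.eventually_mul]
  filter_upwards [hp] with x hx using .of_forall (hR x hx)

theorem exists_ultrafilter_map_mul_map_eq {V W Λ F : Type*} [Semigroup V] [Semigroup W]
    [Nonempty W] [FunLike F V W] [MulHomClass F V W] (φ : Λ → F) (ι : W → V)
    (hφι : ∀ a w, φ a (ι w) = w) {R : Set V} (hne : R.Nonempty) (hR : ∀ x ∈ R, ∀ y, x * y ∈ R) :
    ∃ p : Ultrafilter V, R ∈ p ∧ ∀ a b, p.map (φ a) * p.map (φ b) = p.map (φ a) := by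
  obtain ⟨q, hq⟩ := exists_forall_exists_mul_mul_eq_self (S := Ultrafilter W)
    Ultrafilter.continuous_mul_left
  obtain ⟨v, hv⟩ := hne
  obtain ⟨_, ⟨y, hy, rfl⟩, hidem⟩ := exists_idempotent_in_compact_subsemigroup
    Ultrafilter.continuous_mul_left ((· * q.map ι) '' {y : Ultrafilter V | R ∈ y})
    (Set.Nonempty.image _ ⟨pure v, hv⟩)
    ((ultrafilter_isClosed_basic R).isCompact.image (Ultrafilter.continuous_mul_left _))
    (by
      rintro _ ⟨y, hy, rfl⟩ _ ⟨z, -, rfl⟩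
      exact ⟨y * q.map ι * z, mem_ultrafilter_mul_of_forall_mul_mem hR
        (mem_ultrafilter_mul_of_forall_mul_mem hR hy _) z, mul_assoc _ _ _⟩)
  refine ⟨y * q.map ι, mem_ultrafilter_mul_of_forall_mul_mem hR hy _, fun a b => ?_⟩
  have hmap (a : Λ) : (y * q.map ι).map (φ a) = y.map (φ a) * q := by
    rw [ultrafilter_map_mul, Ultrafilter.map_map,
      show φ a ∘ ι = id from funext (hφι a), Ultrafilter.map_id]
  obtain ⟨z, hz⟩ := hq (y.map (φ b))
  have hab : (y * q.map ι).map (φ a) = y.map (φ a) * z * (y * q.map ι).map (φ b) := by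
    rw [hmap, hmap, mul_assoc, hz]
  rw [hab, mul_assoc, ← ultrafilter_map_mul, hidem]

theorem exists_forall_mul_prod_mapIdx_mem {V W Λ : Type*} [Monoid W] [Finite Λ] {φ : Λ → V → W}
    {B : Set W} {R : Set V}
    (hstep : ∀ F ⊆ B, F.Finite → ∃ v ∈ R, ∀ w ∈ F, ∀ a, w * φ a v ∈ B) {w : W} (hw : w ∈ B) :
    ∃ v : ℕ → V, (∀ j, v j ∈ R) ∧
      ∀ l : List Λ, w * (l.mapIdx fun j a => φ a (v j)).prod ∈ B := by
  choose pick hpickR hpickB using fun F : {F : Set W // F ⊆ B ∧ F.Finite} => hstep F F.2.1 F.2.2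
  let F : ℕ → {F : Set W // F ⊆ B ∧ F.Finite} := Nat.rec
    ⟨{w}, Set.singleton_subset_iff.2 hw, Set.finite_singleton w⟩ fun _ F =>
      ⟨Set.image2 (fun w a => w * φ a (pick F)) F Set.univ,
        Set.image2_subset_iff.2 fun w hw a _ => hpickB F w hw a,
        F.2.2.image2 _ Set.finite_univ⟩
  refine ⟨fun j => pick (F j), fun j => hpickR _, fun l => (F l.length).2.1 ?_⟩
  induction l using List.reverseRecOn with
  | nil => exact (mul_one w).symm ▸ rfl
  | append_singleton l a ih =>
    rw [List.mapIdx_concat, List.prod_append, List.prod_singleton, ← mul_assoc, List.length_append]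
    exact ⟨_, ih, a, Set.mem_univ a, rfl⟩

theorem exists_forall_mul_prod_mapIdx_mem_of_ultrafilter {V W Λ : Type*} [Monoid W] [Finite Λ]
    {φ : Λ → V → W} {p : Ultrafilter V}
    (hp : ∀ a b, p.map (φ a) * p.map (φ b) = p.map (φ a)) {R : Set V} (hR : R ∈ p)
    {A : Set W} {a₀ : Λ} (hA : A ∈ p.map (φ a₀)) :
    ∃ w, ∃ v : ℕ → V, (∀ j, v j ∈ R) ∧
      ∀ l : List Λ, w * (l.mapIdx fun j a => φ a (v j)).prod ∈ A := by
  let B : Set W := {w | w ∈ A ∧ ∀ a, ∀ᶠ v in (p : Filter V), w * φ a v ∈ A}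
  have mem_B (w : W) (a : Λ) (h : ∀ᶠ v in (p : Filter V), w * φ a v ∈ A) :
      ∀ᶠ v in (p : Filter V), w * φ a v ∈ B := by
    refine h.and (Filter.eventually_all.2 fun b => ?_)
    have h' : ∀ᶠ x in (p.map (φ a) : Filter W), w * x ∈ A := h
    rw [← hp a b, Ultrafilter.eventually_mul] at h'
    simpa only [Ultrafilter.coe_map, Filter.eventually_map, ← mul_assoc] using h'
  have hstep (F : Set W) (hFB : F ⊆ B) (hF : F.Finite) :
      ∃ v ∈ R, ∀ w ∈ F, ∀ a, w * φ a v ∈ B := by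
    have h : ∀ᶠ v in (p : Filter V), ∀ w ∈ F, ∀ a, w * φ a v ∈ B :=
      (Filter.eventually_all_finite hF).2 fun w hw =>
        Filter.eventually_all.2 fun a => mem_B w a ((hFB hw).2 a)
    exact (Filter.Eventually.and hR h).exists
  obtain ⟨v₀, hv₀⟩ := (mem_B 1 a₀ (by simp only [one_mul]; exact hA)).exists
  obtain ⟨v, hvR, hv⟩ := exists_forall_mul_prod_mapIdx_mem hstep hv₀
  exact ⟨_, v, hvR, fun l => (hv l).1⟩

/-- The instance at the letters of `l` of the sequence of left variable words that consist of a
variable followed by `v 0`, `v 1`, …, where `none` encodes the variable. -/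
def substituteLetters {Λ : Type*} (v : ℕ → List (Option Λ)) (l : List Λ) : List Λ :=
  (l.mapIdx fun j a => a :: (v j).map (·.getD a)).flatten

theorem substituteLetters_concat {Λ : Type*} (v : ℕ → List (Option Λ)) (l : List Λ) (a : Λ) :
    substituteLetters v (l ++ [a]) =
      substituteLetters v l ++ a :: (v l.length).map (·.getD a) := by
  simp [substituteLetters, List.mapIdx_concat]

theorem map_substituteLetters {Λ Λ' : Type*} (f : Λ → Λ') (v : ℕ → List (Option Λ)) (l : List Λ) :
    (substituteLetters v l).map f =
      substituteLetters (fun j => (v j).map (Option.map f)) (l.map f) := by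
  induction l using List.reverseRecOn with
  | nil => rfl
  | append_singleton l a ih =>
    simp [substituteLetters_concat, ih, Function.comp_def, Option.getD_map]

theorem length_substituteLetters {Λ : Type*} (v : ℕ → List (Option Λ)) (l : List Λ) :
    (substituteLetters v l).length = ∑ j ∈ Finset.range l.length, ((v j).length + 1) := by
  induction l using List.reverseRecOn with
  | nil => rfl
  | append_singleton l a ih =>
    simp [substituteLetters_concat, ih, Finset.sum_range_succ]

theorem carlson_simpson {Λ : Type*} [Finite Λ] [Nonempty Λ] (A : Set (List Λ)) :
    ∃ (w : List Λ) (v : ℕ → List (Option Λ)),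
      (∀ l : List Λ, w ++ substituteLetters v l ∈ A) ∨
        ∀ l : List Λ, w ++ substituteLetters v l ∉ A := by
  let φ (a : Λ) : FreeMonoid (Option Λ) →* FreeMonoid Λ := FreeMonoid.map (·.getD a)
  obtain ⟨p, hpR, hp⟩ := exists_ultrafilter_map_mul_map_eq φ
    (FreeMonoid.map (some : Λ → Option Λ))
    (fun a w => FreeMonoid.map_map.trans (congrFun (congrArg _ FreeMonoid.map_id) w))
    (R := Set.range (FreeMonoid.of none * ·)) ⟨_, 1, rfl⟩
    (by rintro _ ⟨x, rfl⟩ y; exact ⟨x * y, (mul_assoc _ _ _).symm⟩)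
  have key (A : Set (List Λ)) (hA : A ∈ p.map (φ (Classical.arbitrary Λ))) :
      ∃ (w : List Λ) (v : ℕ → List (Option Λ)),
        ∀ l : List Λ, w ++ substituteLetters v l ∈ A := by
    obtain ⟨w, v, hvR, hv⟩ := exists_forall_mul_prod_mapIdx_mem_of_ultrafilter hp hpR hA
    choose u hu using hvR
    obtain rfl : (fun j => FreeMonoid.of none * u j) = v := funext hu
    refine ⟨w.toList, fun j => (u j).toList, fun l => ?_⟩
    have heq : FreeMonoid.toList (w * (l.mapIdx fun j a => φ a (FreeMonoid.of none * u j)).prod) =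
        w.toList ++ substituteLetters (fun j => (u j).toList) l := by
      rw [FreeMonoid.toList_mul, FreeMonoid.toList_prod, substituteLetters]
      congr 2
      exact List.ext_getElem (by simp) (by simp [φ])
    exact heq ▸ hv l
  rcases Ultrafilter.mem_or_compl_mem (p.map (φ (Classical.arbitrary Λ))) A with hA | hA
  · obtain ⟨w, v, h⟩ := key A hA
    exact ⟨w, v, .inl h⟩
  · obtain ⟨w, v, h⟩ := key Aᶜ hA
    exact ⟨w, v, .inr h⟩

end CarlsonSimpson

theorem exists_concat_prefix_of_lt_length {α : Type*} {l : List α} {n : ℕ} (h : n < l.length) :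
    ∃ p a, p.length = n ∧ p ++ [a] <+: l :=
  ⟨l.take n, l[n], by simp [h.le], by rw [List.take_append_getElem]; exact List.take_prefix _ _⟩

theorem lt_iff_exists_fork {u v : List Bool} (h : u.length = v.length) :
    u < v ↔ ∃ p, p ++ [false] <+: u ∧ p ++ [true] <+: v := by
  constructor
  · intro huv
    induction u generalizing v with
    | nil => exact absurd huv (by simp [List.length_eq_zero_iff.1 h.symm])
    | cons a u ih =>
      obtain ⟨b, v, rfl⟩ := List.exists_cons_of_length_eq_add_one h.symm
      rcases List.cons_lt_cons_iff.1 huv with hab | ⟨rfl, huv'⟩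
      · obtain ⟨rfl, rfl⟩ := Bool.lt_iff.1 hab
        exact ⟨[], by simp⟩
      · obtain ⟨p, hu, hv⟩ := ih (Nat.succ.inj h) huv'
        exact ⟨a :: p, by simpa using hu, by simpa using hv⟩
  · rintro ⟨p, ⟨s, rfl⟩, ⟨t, rfl⟩⟩
    clear h
    induction p with
    | nil => exact List.cons_lt_cons_iff.2 (.inl Bool.false_lt_true)
    | cons a p ih => exact List.cons_lt_cons_iff.2 (.inr ⟨rfl, ih⟩)

theorem fork_unique {p q u v : List Bool} (hpu : p ++ [false] <+: u) (hpv : p ++ [true] <+: v)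
    (hqu : q ++ [false] <+: u) (hqv : q ++ [true] <+: v) : p = q := by
  wlog hpq : p.length ≤ q.length generalizing p q
  · exact (this hqu hqv hpu hpv (le_of_not_ge hpq)).symm
  obtain hpq | hpq := hpq.eq_or_lt
  · exact (List.append_inj' (List.prefix_of_prefix_length_le hpu hqu (by simp [hpq]) |>.eq_of_length
      (by simp [hpq])) rfl).1
  · have hu : p ++ [false] <+: q := List.prefix_of_prefix_length_le hpu
      ((List.prefix_append _ _).trans hqu) (by simpa using hpq)
    have hv : p ++ [true] <+: q := List.prefix_of_prefix_length_le hpv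
      ((List.prefix_append _ _).trans hqv) (by simpa using hpq)
    have := (List.prefix_of_prefix_length_le hu hv (by simp)).eq_of_length (by simp)
    simp at this

/-- The embeddings of `2^{<ℕ}` into itself whose ranges are the strong subtrees: they preserve
immediate successors in the given direction and map levels into levels. -/
structure StrongEmbedding where
  /-- The underlying function. -/
  toFun : List Bool → List Bool
  length_congr' {u v : List Bool} : u.length = v.length → (toFun u).length = (toFun v).length
  concat_prefix' (u : List Bool) (b : Bool) : toFun u ++ [b] <+: toFun (u ++ [b])

namespace StrongEmbedding

instance : FunLike StrongEmbedding (List Bool) (List Bool) where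
  coe := toFun
  coe_injective e e' h := by cases e; congr

variable {e e' g h : StrongEmbedding} {u v : List Bool} {k m n : ℕ}

@[ext] theorem ext (h : ∀ u, e u = e' u) : e = e' := DFunLike.ext _ _ h

theorem length_congr (e : StrongEmbedding) (h : u.length = v.length) :
    (e u).length = (e v).length :=
  e.length_congr' h

theorem concat_prefix (e : StrongEmbedding) (u : List Bool) (b : Bool) :
    e u ++ [b] <+: e (u ++ [b]) :=
  e.concat_prefix' u b

theorem prefix_append (e : StrongEmbedding) (u w : List Bool) : e u <+: e (u ++ w) := by
  induction w using List.reverseRecOn with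
  | nil => rw [List.append_nil]
  | append_singleton w b ih =>
    rw [← List.append_assoc]
    exact ih.trans ((List.prefix_append _ _).trans (e.concat_prefix _ _))

theorem map_prefix (e : StrongEmbedding) (h : u <+: v) : e u <+: e v := by
  obtain ⟨w, rfl⟩ := h
  exact e.prefix_append u w

theorem map_concat_prefix (e : StrongEmbedding) {b : Bool} (h : u ++ [b] <+: v) :
    e u ++ [b] <+: e v :=
  (e.concat_prefix u b).trans (e.map_prefix h)

instance : Monoid StrongEmbedding where
  one := ⟨id, id, fun _ _ => List.prefix_rfl⟩
  mul e e' := ⟨e ∘ e', fun h => e.length_congr (e'.length_congr h),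
    fun u b => e.map_concat_prefix (e'.concat_prefix u b)⟩
  mul_assoc _ _ _ := rfl
  one_mul _ := rfl
  mul_one _ := rfl

@[simp] theorem mul_apply (e e' : StrongEmbedding) (u : List Bool) : (e * e') u = e (e' u) := rfl

/-- The level into which `e` maps level `n`. -/
def height (e : StrongEmbedding) (n : ℕ) : ℕ := (e (List.replicate n false)).length

theorem length_apply (e : StrongEmbedding) (u : List Bool) : (e u).length = e.height u.length :=
  e.length_congr List.length_replicate.symm

theorem height_strictMono (e : StrongEmbedding) : StrictMono e.height :=
  strictMono_nat_of_lt_succ fun n => by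
    simpa [length_apply] using (e.concat_prefix (List.replicate n false) false).length_le

theorem length_apply_lt_iff : (e u).length < (e v).length ↔ u.length < v.length := by
  rw [length_apply, length_apply, e.height_strictMono.lt_iff_lt]

theorem length_apply_eq_iff : (e u).length = (e v).length ↔ u.length = v.length := by
  rw [length_apply, length_apply, e.height_strictMono.injective.eq_iff]

theorem length_le_length_apply (e : StrongEmbedding) (u : List Bool) :
    u.length ≤ (e u).length :=
  e.length_apply u ▸ e.height_strictMono.le_apply

theorem apply_lt_apply (e : StrongEmbedding) (hlen : u.length = v.length) (h : u < v) :
    e u < e v := by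
  obtain ⟨p, hu, hv⟩ := (lt_iff_exists_fork hlen).1 h
  exact (lt_iff_exists_fork (e.length_congr hlen)).2
    ⟨e p, e.map_concat_prefix hu, e.map_concat_prefix hv⟩

theorem injective (e : StrongEmbedding) : Function.Injective e := by
  intro u v h
  have hlen : u.length = v.length := length_apply_eq_iff.1 (congrArg List.length h)
  rcases lt_trichotomy u v with huv | huv | huv
  · exact absurd h (e.apply_lt_apply hlen huv).ne
  · exact huv
  · exact absurd h (e.apply_lt_apply hlen.symm huv).ne'

theorem concat_prefix_of_map_concat_prefix {b : Bool} (h : e u ++ [b] <+: e v) :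
    u ++ [b] <+: v := by
  have hlen : u.length < v.length :=
    (length_apply_lt_iff (e := e)).1 (by simpa using h.length_le)
  obtain ⟨p, c, hp, hpv⟩ := exists_concat_prefix_of_lt_length hlen
  have heq : e p ++ [c] = e u ++ [b] :=
    (List.prefix_of_prefix_length_le (e.map_concat_prefix hpv) h
      (by simp [e.length_congr hp])).eq_of_length (by simp [e.length_congr hp])
  obtain ⟨hpu, hcb⟩ := List.append_inj' heq rfl
  rwa [← e.injective hpu, ← hcb]

theorem exists_eq_mul_of_range_subset (h : Set.range e' ⊆ Set.range e) : ∃ g, e' = e * g := by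
  choose g hg using fun u => h (Set.mem_range_self u)
  refine ⟨⟨g, fun {u v} huv => ?_, fun u b => ?_⟩, ext fun u => (hg u).symm⟩
  · rw [← length_apply_eq_iff (e := e), hg, hg]
    exact e'.length_congr huv
  · refine concat_prefix_of_map_concat_prefix (e := e) ?_
    rw [hg, hg]
    exact e'.concat_prefix u b

/-- The strong embeddings that are the identity below level `k`. -/
def fix (k : ℕ) : Submonoid StrongEmbedding where
  carrier := {g | ∀ u : List Bool, u.length < k → g u = u}
  one_mem' _ _ := rfl
  mul_mem' {g h} hg hh u hu := by rw [mul_apply, hh u hu, hg u hu]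

theorem fix_antitone : Antitone fix := fun _ _ hkm _ hg u hu => hg u (hu.trans_le hkm)

theorem exists_mem_fix_eq_mul (hrange : Set.range e' ⊆ Set.range e)
    (hlt : ∀ u : List Bool, u.length < k → e' u = e u) : ∃ g ∈ fix k, e' = e * g := by
  obtain ⟨g, rfl⟩ := exists_eq_mul_of_range_subset hrange
  exact ⟨g, fun u hu => e.injective (hlt u hu), rfl⟩

theorem prefix_apply_of_mem_fix (hg : g ∈ fix u.length) : u <+: g u := by
  rcases List.eq_nil_or_concat' u with rfl | ⟨p, b, rfl⟩
  · exact List.nil_prefix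
  · have h := g.concat_prefix p b
    rwa [hg p (by simp)] at h

/-- The part of `g (u ++ w)` above `u`, meaningful for `g ∈ fix u.length`. -/
def tail (g : StrongEmbedding) (u w : List Bool) : List Bool := (g (u ++ w)).drop u.length

theorem append_tail (hg : g ∈ fix u.length) (w : List Bool) : u ++ g.tail u w = g (u ++ w) :=
  List.prefix_iff_eq_append.1 ((prefix_apply_of_mem_fix hg).trans (g.prefix_append u w))

theorem length_tail_congr (g : StrongEmbedding) {w w' : List Bool} (huv : u.length = v.length)
    (hw : w.length = w'.length) : (g.tail u w).length = (g.tail v w').length := by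
  rw [tail, tail, List.length_drop, List.length_drop, huv,
    g.length_congr (v := v ++ w') (by simp [huv, hw])]

theorem tail_concat_prefix (g : StrongEmbedding) (u w : List Bool) (b : Bool) :
    g.tail u w ++ [b] <+: g.tail u (w ++ [b]) := by
  have hle : u.length ≤ (g (u ++ w)).length :=
    (List.prefix_append u w).length_le.trans (g.length_le_length_apply _)
  have h := (g.concat_prefix (u ++ w) b).drop u.length
  rwa [List.drop_append_of_le_length hle, List.append_assoc] at h

/-- The strings of length `k`. -/
abbrev Level (k : ℕ) : Type := {u : List Bool // u.length = k}

instance (k : ℕ) : Finite (Level k) := (List.finite_length_eq Bool k).to_subtype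

theorem exists_eq_level_append (h : k ≤ u.length) : ∃ (x : Level k) (w : List Bool), u = x ++ w :=
  ⟨⟨u.take k, by simpa using h⟩, u.drop k, (List.take_append_drop k u).symm⟩

/-- The embedding in `fix k` that acts above each string `x` of length `k` as `f x`. -/
def graft (k : ℕ) (f : Level k → List Bool → List Bool)
    (hlen : ∀ x y w w', w.length = w'.length → (f x w).length = (f y w').length)
    (hconcat : ∀ x w b, f x w ++ [b] <+: f x (w ++ [b])) : StrongEmbedding where
  toFun u := if h : k ≤ u.length then u.take k ++ f ⟨u.take k, by simpa using h⟩ (u.drop k) else u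
  length_congr' {u v} huv := by
    simp only [huv]
    split_ifs with h
    · simp [huv, hlen _ ⟨v.take k, by simpa using h⟩ (u.drop k) (v.drop k) (by simp [huv])]
    · exact huv
  concat_prefix' u b := by
    rcases lt_trichotomy (u.length + 1) k with h | h | h
    · simp [h.not_ge, (Nat.lt_of_succ_lt h).not_ge]
    · subst h
      simp [List.take_of_length_le]
    · have hk : k ≤ u.length := Nat.le_of_lt_succ h
      have hk' : k ≤ (u ++ [b]).length := by simp; omega
      simp only [hk, hk', dif_pos, List.take_append_of_le_length, List.drop_append_of_le_length]
      rw [List.append_assoc, List.prefix_append_right_inj]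
      exact hconcat _ _ _

section graft

variable {f : Level k → List Bool → List Bool}
  {hlen : ∀ x y w w', w.length = w'.length → (f x w).length = (f y w').length}
  {hconcat : ∀ x w b, f x w ++ [b] <+: f x (w ++ [b])}

theorem graft_append (x : Level k) (w : List Bool) :
    graft k f hlen hconcat (x ++ w) = x ++ f x w := by
  obtain ⟨x, rfl⟩ := x
  change dite _ _ _ = _
  simp

theorem graft_mem_fix : graft k f hlen hconcat ∈ fix k := fun _ hu => dif_neg hu.not_ge

end graft

/-- The strong embeddings that map level `k` into level `m` and copy verbatim what lies above
level `k`. -/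
def tight (k m : ℕ) : Set StrongEmbedding :=
  {h | ∀ x : List Bool, x.length = k → (h x).length = m ∧ ∀ w, h (x ++ w) = h x ++ w}

theorem finite_tight (k m : ℕ) : (tight k m).Finite := by
  have := (List.finite_length_le Bool k).to_subtype
  refine Set.Finite.of_injOn
    (f := fun (h : StrongEmbedding) (u : {u : List Bool | u.length ≤ k}) => h u)
    (t := {φ | ∀ u, φ u ∈ {v : List Bool | v.length ≤ m}}) ?_ ?_
    (Set.Finite.pi' fun _ => List.finite_length_le Bool m)
  · intro h hh u
    obtain ⟨hm, -⟩ := hh (List.replicate k false) List.length_replicate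
    rw [length_apply, List.length_replicate] at hm
    change (h u).length ≤ m
    rw [length_apply, ← hm]
    exact h.height_strictMono.monotone u.2
  · intro h hh h' hh' heq
    have heq (u : List Bool) (hu : u.length ≤ k) : h u = h' u := congrFun heq ⟨u, hu⟩
    ext1 u
    rcases le_total u.length k with hu | hu
    · exact heq u hu
    · obtain ⟨x, w, rfl⟩ := exists_eq_level_append hu
      rw [(hh x x.2).2, (hh' x x.2).2, heq x x.2.le]

theorem length_apply_lt_of_mem_tight (hh : h ∈ tight k m) (hu : u.length < k) :
    (h u).length < m := by
  have hlt : u.length < (List.replicate k false).length := by simpa using hu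
  exact (length_apply_lt_iff (e := h)).2 hlt |>.trans_eq (hh _ List.length_replicate).1

theorem exists_mul_eq_tight_mul (hh : h ∈ tight k m) (hg : g ∈ fix m) :
    ∃ g' ∈ fix k, g * h = h * g' := by
  refine exists_mem_fix_eq_mul (Set.range_subset_iff.2 fun u => ?_)
    fun u hu => hg _ (length_apply_lt_of_mem_tight hh hu)
  rcases lt_or_ge u.length k with hu | hu
  · exact ⟨u, (hg _ (length_apply_lt_of_mem_tight hh hu)).symm⟩
  · obtain ⟨x, w, rfl⟩ := exists_eq_level_append hu
    obtain ⟨rfl, hx⟩ := hh x x.2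
    exact ⟨x ++ g.tail (h x) w, by rw [hx, append_tail hg, mul_apply, hx]⟩

theorem exists_mul_tight_eq (hh : h ∈ tight k m) (hg : g ∈ fix k) :
    ∃ g' ∈ fix m, g' * h = h * g := by
  have hne : Nonempty (Level k) := ⟨⟨_, List.length_replicate (a := false)⟩⟩
  let φ (x : Level k) : Level m := ⟨h x, (hh x x.2).1⟩
  have hφ : φ.Injective := fun x y hxy => Subtype.ext (h.injective (congrArg Subtype.val hxy))
  obtain ⟨σ, hσ⟩ := hφ.hasLeftInverse
  refine ⟨graft m (fun y => g.tail (σ y))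
    (fun x y _ _ hw => g.length_tail_congr ((σ x).2.trans (σ y).2.symm) hw)
    (fun _ _ _ => g.tail_concat_prefix _ _ _), graft_mem_fix, ext fun u => ?_⟩
  rcases lt_or_ge u.length k with hu | hu
  · rw [mul_apply, mul_apply, hg u hu, graft_mem_fix _ (length_apply_lt_of_mem_tight hh hu)]
  · obtain ⟨x, w, rfl⟩ := exists_eq_level_append hu
    have hg' : g ∈ fix (x : List Bool).length := by rwa [x.2]
    rw [mul_apply, (hh x x.2).2, mul_apply, ← append_tail hg', (hh x x.2).2]
    exact (graft_append (φ x) w).trans (by rw [hσ x])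

/-- The embedding that agrees with `g` up to level `k` and makes no choices above. -/
def trunc (k : ℕ) (g : StrongEmbedding) : StrongEmbedding where
  toFun u := g (u.take k) ++ u.drop k
  length_congr' {u v} huv := by
    rw [List.length_append, List.length_append, g.length_congr (v := v.take k) (by simp [huv])]
    simp [huv]
  concat_prefix' u b := by
    rcases lt_or_ge u.length k with h | h
    · simpa [List.take_of_length_le h.le, List.drop_of_length_le h.le, List.take_of_length_le,
        List.drop_of_length_le, Nat.succ_le_of_lt h] using g.concat_prefix u b
    · simp [List.take_append_of_le_length h, List.drop_append_of_le_length h]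

theorem trunc_append (g : StrongEmbedding) (x : Level k) (w : List Bool) :
    trunc k g (x ++ w) = g x ++ w := by
  obtain ⟨x, rfl⟩ := x
  change g _ ++ _ = _
  simp

theorem trunc_apply_of_le (g : StrongEmbedding) (hu : u.length ≤ k) : trunc k g u = g u := by
  change g _ ++ _ = _
  simp [List.take_of_length_le hu, List.drop_of_length_le hu]

theorem trunc_congr (h : ∀ u : List Bool, u.length ≤ k → g u = e u) : trunc k g = trunc k e :=
  ext fun u => congrArg (· ++ u.drop k) (h _ (List.length_take_le k u))

theorem trunc_mem_tight (k j : ℕ) (g : StrongEmbedding) :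
    trunc k g ∈ tight (k + j) (g.height k + j) := by
  intro x hx
  obtain ⟨x, w, rfl⟩ := exists_eq_level_append (Nat.le.intro hx.symm)
  have hw : w.length = j := by simpa [x.2] using hx
  simp [trunc_append, List.append_assoc, length_apply, x.2, hw]

theorem exists_eq_trunc_mul (k : ℕ) (g : StrongEmbedding) :
    ∃ g' ∈ fix (k + 1), g = trunc k g * g' := by
  refine exists_mem_fix_eq_mul (Set.range_subset_iff.2 fun u => ?_)
    fun u hu => (trunc_apply_of_le g (Nat.le_of_lt_succ hu)).symm
  rcases le_total u.length k with hu | hu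
  · exact ⟨u, trunc_apply_of_le g hu⟩
  · obtain ⟨x, w, rfl⟩ := exists_eq_level_append hu
    obtain ⟨t, ht⟩ := g.prefix_append x w
    exact ⟨x ++ t, by rw [trunc_append, ht]⟩

theorem exists_eq_tight_mul (g : StrongEmbedding) (k : ℕ) :
    ∃ m ≥ k, ∃ h ∈ tight k m, ∃ g' ∈ fix k, g = h * g' := by
  obtain ⟨g', hg', heq⟩ := exists_eq_trunc_mul k g
  exact ⟨_, g.height_strictMono.le_apply, _, trunc_mem_tight k 0 g, g',
    fix_antitone (Nat.le_succ k) hg', heq⟩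

theorem exists_limit (n : ℕ) (E : ℕ → StrongEmbedding)
    (hE : ∀ j, ∃ g ∈ fix (n + j), E (j + 1) = E j * g) :
    ∃ e, ∀ j, ∃ g ∈ fix (n + j), e = E j * g := by
  have hmul {i j : ℕ} (hij : i ≤ j) : ∃ g ∈ fix (n + i), E j = E i * g := by
    induction j, hij using Nat.le_induction with
    | base => exact ⟨1, one_mem _, rfl⟩
    | succ j hij ih =>
      obtain ⟨g, hg, heq⟩ := ih
      obtain ⟨g', hg', heq'⟩ := hE j
      exact ⟨g * g', mul_mem hg (fix_antitone (by omega) hg'), by rw [heq', heq, mul_assoc]⟩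
  have hstable {i j : ℕ} (hij : i ≤ j) (u : List Bool) (hu : u.length < n + i) :
      E j u = E i u := by
    obtain ⟨g, hg, heq⟩ := hmul hij
    rw [heq, mul_apply, hg u hu]
  let e : StrongEmbedding :=
    { toFun := fun u => E (u.length + 1) u
      length_congr' := fun {u v} huv => by simp only [huv]; exact length_congr _ huv
      concat_prefix' := fun u b => by
        rw [← hstable (i := u.length + 1) (Nat.le_succ _) u (by omega), List.length_append]
        exact concat_prefix _ u b }
  have he (u : List Bool) {j : ℕ} (hj : u.length < j) : e u = E j u :=
    (hstable hj u (by omega)).symm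
  refine ⟨e, fun j => exists_mem_fix_eq_mul (Set.range_subset_iff.2 fun u => ?_) fun u hu => ?_⟩
  · obtain ⟨g, -, heq⟩ := hmul (le_max_right (u.length + 1) j)
    exact ⟨g u, by rw [he u (le_max_left _ j), heq, mul_apply]⟩
  · rw [he u (le_max_left _ j), hstable (le_max_right _ j) u hu]

theorem exists_forall_map_apply_eq {ι α : Type*} {N : ℕ} (t : ι → List α)
    (ht : ∀ i, (t i).length = N) : ∃ l : List (ι → α), ∀ i, l.map (· i) = t i :=
  ⟨(List.finRange N).map fun j i => (t i)[j]'(by rw [ht]; exact j.2), fun i =>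
    List.ext_getElem (by simp [ht]) (by simp)⟩

theorem mem_iff_mem_of_eq_on_level {O : Set StrongEmbedding}
    (hO : ∀ g ∈ fix k, ∀ g' ∈ fix (k + 1), g ∈ O ↔ g * g' ∈ O) (hg : g ∈ fix k) (he : e ∈ fix k)
    (heq : ∀ x : Level k, g x = e x) : g ∈ O ↔ e ∈ O := by
  have hle (u : List Bool) (hu : u.length ≤ k) : g u = e u := by
    obtain hu | hu := hu.lt_or_eq
    · rw [hg u hu, he u hu]
    · exact heq ⟨u, hu⟩
  have htrunc {a : StrongEmbedding} (ha : a ∈ fix k) : trunc k a ∈ O ↔ a ∈ O := by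
    obtain ⟨b, hb, hab⟩ := exists_eq_trunc_mul k a
    have hmem : trunc k a ∈ fix k := fun u hu => (trunc_apply_of_le a hu.le).trans (ha u hu)
    simpa only [← hab] using hO _ hmem b hb
  rw [← htrunc hg, ← htrunc he, trunc_congr hle]

theorem pigeonhole (k : ℕ) (O : Set StrongEmbedding)
    (hO : ∀ g ∈ fix k, ∀ g' ∈ fix (k + 1), g ∈ O ↔ g * g' ∈ O) :
    ∃ g ∈ fix k, (∀ g' ∈ fix k, g * g' ∈ O) ∨ (∀ g' ∈ fix k, g * g' ∉ O) := by
  -- A word over the alphabet `Level k → Bool` encodes a level of a tree above the level `k`.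
  let A : Set (List (Level k → Bool)) :=
    {l | ∃ g ∈ fix k, g ∈ O ∧ ∀ x : Level k, g x = x ++ l.map (· x)}
  obtain ⟨w, v, hwv⟩ := carlson_simpson A
  let f (x : Level k) (u : List Bool) : List Bool :=
    w.map (· x) ++ substituteLetters (fun j => (v j).map (Option.map (· x))) u
  have hf (x : Level k) (l : List (Level k → Bool)) :
      f x (l.map (· x)) = (w ++ substituteLetters v l).map (· x) := by
    rw [List.map_append, map_substituteLetters]
  let g : StrongEmbedding := graft k f
    (fun _ _ _ _ hu => by simp [f, length_substituteLetters, hu])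
    (fun _ _ _ => by simp [f, substituteLetters_concat])
  have hg : g ∈ fix k := graft_mem_fix
  refine ⟨g, hg, ?_⟩
  have key {g' : StrongEmbedding} (hg' : g' ∈ fix k) :
      ∃ l, w ++ substituteLetters v l ∈ A ↔ g * g' ∈ O := by
    have hfix (x : Level k) : g' ∈ fix (x : List Bool).length := by rwa [x.2]
    obtain ⟨l, hl⟩ := exists_forall_map_apply_eq (fun x : Level k => g'.tail x []) fun x =>
      g'.length_tail_congr (x.2.trans (List.length_replicate (a := false)).symm) rfl
    have happly (x : Level k) : (g * g') x = x ++ (w ++ substituteLetters v l).map (· x) := by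
      have htail := append_tail (hfix x) []
      rw [List.append_nil] at htail
      rw [mul_apply, ← htail, ← hf, hl]
      exact graft_append x _
    refine ⟨l, ⟨?_, fun h => ⟨_, mul_mem hg hg', h, happly⟩⟩⟩
    rintro ⟨e, he, heO, hex⟩
    exact (mem_iff_mem_of_eq_on_level hO he (mul_mem hg hg') fun x =>
      (hex x).trans (happly x).symm).1 heO
  refine hwv.imp (fun h g' hg' => ?_) fun h g' hg' => ?_
  · obtain ⟨l, hl⟩ := key hg'
    exact hl.1 (h l)
  · obtain ⟨l, hl⟩ := key hg'
    exact fun hmem => h l (hl.2 hmem)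

instance : RamseyMonoid StrongEmbedding where
  fix := fix
  tight := tight
  fix_antitone := fix_antitone
  finite_tight := finite_tight
  exists_mul_eq_tight_mul := exists_mul_eq_tight_mul
  exists_mul_tight_eq := exists_mul_tight_eq
  exists_eq_tight_mul := exists_eq_tight_mul
  exists_limit := exists_limit
  pigeonhole := pigeonhole

instance : MeasurableSpace StrongEmbedding := RamseyMonoid.measurableSpace

end StrongEmbedding

namespace StrongEmbedding

variable {e c c' : StrongEmbedding} {u v : List Bool} {n : ℕ}

theorem length_apply_eq_height_iff : (e u).length = e.height n ↔ u.length = n := by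
  rw [length_apply, e.height_strictMono.injective.eq_iff]

theorem isStrongSubtree_range (e : StrongEmbedding) : IsStrongSubtree (Set.range e) := by
  simp only [IsStrongSubtree, ExistsUnique, Set.forall_mem_range, Set.exists_range_iff, and_imp]
  refine ⟨e.height, e.height_strictMono, fun u => ⟨_, e.length_apply u⟩,
    ⟨e [], ⟨⟨[], rfl⟩, e.length_apply []⟩, ?_⟩, fun n u hu i => ?_, fun n u hu => ?_⟩
  · intro u hu
    rw [List.length_eq_zero_iff.1 (length_apply_eq_height_iff.1 hu)]
  · rw [length_apply_eq_height_iff] at hu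
    refine ⟨e (u ++ [i]), ⟨⟨_, rfl⟩, length_apply_eq_height_iff.2 (by simp [hu]),
      e.concat_prefix u i⟩, ?_⟩
    intro v hv huv
    rw [length_apply_eq_height_iff] at hv
    rw [(concat_prefix_of_map_concat_prefix huv).eq_of_length (by simp [hu, hv])]
  · rw [length_apply_eq_height_iff] at hu
    obtain ⟨p, i, rfl⟩ := List.eq_nil_or_concat' u |>.resolve_left (by rintro rfl; simp at hu)
    exact ⟨p, length_apply_eq_height_iff.2 (by simpa using hu), i, e.concat_prefix p i⟩

/-- The strong subtree enumerated by a strong embedding; every strong subtree is of this form. -/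
def tree (e : StrongEmbedding) : Sinf := ⟨Set.range e, e.isStrongSubtree_range⟩

theorem exists_range_eq {A : Set (List Bool)} (hA : IsStrongSubtree A) :
    ∃ e : StrongEmbedding, Set.range e = A := by
  obtain ⟨k, hk, hlen, ⟨r, ⟨hr, hr₀⟩, hroot⟩, hchild, hparent⟩ := hA
  choose ht hht using fun a : A => hlen a a.2
  choose child hmem hunique using fun (a : A) (i : Bool) => hchild (ht a) a a.2 (hht a) i
  let φ : List Bool → A := List.foldl (fun a i => ⟨child a i, (hmem a i).1⟩) ⟨r, hr⟩
  have hφ (u : List Bool) (i : Bool) : (φ (u ++ [i]) : List Bool) = child (φ u) i := by simp [φ]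
  have hheight (u : List Bool) : ht (φ u) = u.length := by
    induction u using List.reverseRecOn with
    | nil => exact hk.injective ((hht _).symm.trans hr₀)
    | append_singleton u i ih =>
      refine hk.injective ((hht _).symm.trans ?_)
      rw [hφ, (hmem _ _).2.1, ih, List.length_append, List.length_singleton]
  refine ⟨⟨fun u => φ u, fun {u v} huv => by rw [hht, hht, hheight, hheight, huv], fun u i => ?_⟩,
    Set.Subset.antisymm (Set.range_subset_iff.2 fun u => (φ u).2) fun a ha => ?_⟩
  · rw [hφ]
    exact (hmem _ _).2.2
  · obtain ⟨n, hn⟩ := hlen a ha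
    induction n generalizing a with
    | zero => exact ⟨[], (hroot a ⟨ha, hn⟩).symm⟩
    | succ n ih =>
      obtain ⟨p, hp, hpn, i, hpa⟩ := hparent n a ha hn
      obtain ⟨u, rfl⟩ := ih p hp hpn
      have hu : ht (φ u) = n := hk.injective ((hht _).symm.trans hpn)
      exact ⟨u ++ [i], (hφ u i).trans (hunique (φ u) i a ⟨ha, by rw [hu, hn], hpa⟩).symm⟩

theorem tree_surjective : Function.Surjective tree := fun A =>
  (exists_range_eq A.2).imp fun _ he => Subtype.ext he

theorem levelOf_range (e : StrongEmbedding) : levelOf (Set.range e) = e.height := by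
  have hrange : Set.ofPred (fun m => ∃ a ∈ Set.range e, a.length = m) = Set.range e.height := by
    ext m
    constructor
    · rintro ⟨_, ⟨u, rfl⟩, rfl⟩
      exact ⟨_, (e.length_apply u).symm⟩
    · rintro ⟨n, rfl⟩
      exact ⟨_, ⟨_, rfl⟩, rfl⟩
  have hinf : (Set.ofPred fun m => ∃ a ∈ Set.range e, a.length = m).Infinite :=
    hrange ▸ Set.infinite_range_of_injective e.height_strictMono.injective
  exact ((Nat.nth_strictMono hinf).range_inj e.height_strictMono).1
    ((Nat.range_nth_of_infinite hinf).trans hrange)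

theorem lvlSet_range (e : StrongEmbedding) (n : ℕ) :
    lvlSet (Set.range e) n = e '' {u | u.length = n} := by
  ext a
  constructor
  · rintro ⟨⟨u, rfl⟩, hu⟩
    rw [levelOf_range, length_apply_eq_height_iff] at hu
    exact ⟨u, hu, rfl⟩
  · rintro ⟨u, hu, rfl⟩
    exact ⟨⟨u, rfl⟩, by rwa [levelOf_range, length_apply_eq_height_iff]⟩

theorem approxT_range (e : StrongEmbedding) (n : ℕ) :
    approxT (Set.range e) n = e '' {u | u.length < n} := by
  ext a
  simp only [approxT, levelOf_range]
  constructor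
  · rintro ⟨⟨u, rfl⟩, l, hl, hu⟩
    exact ⟨u, (length_apply_eq_height_iff.1 hu).trans_lt hl, rfl⟩
  · rintro ⟨u, hu, rfl⟩
    exact ⟨⟨u, rfl⟩, _, hu, e.length_apply u⟩

theorem range_inter_level (hu : (c u).length = n) :
    Set.range c ∩ {z | z.length = n} = Set.range fun x : Level u.length => c x := by
  ext z
  constructor
  · rintro ⟨⟨v, rfl⟩, hv⟩
    exact ⟨⟨v, length_apply_eq_iff.1 (hv.trans hu.symm)⟩, rfl⟩
  · rintro ⟨x, rfl⟩
    exact ⟨⟨x, rfl⟩, (c.length_congr x.2).trans hu⟩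

theorem strictMono_level (c : StrongEmbedding) (n : ℕ) : StrictMono fun x : Level n => c x :=
  fun x y hxy => c.apply_lt_apply (x.2.trans y.2.symm) hxy

theorem card_level (n : ℕ) : Nat.card (Level n) = 2 ^ n :=
  (Nat.card_eq_fintype_card (α := List.Vector Bool n)).trans
    (by rw [card_vector, Fintype.card_bool])

theorem apply_eq_of_range_inter_level_eq
    (h : Set.range c ∩ {z | z.length = n} = Set.range c' ∩ {z | z.length = n})
    (hu : (c u).length = n) (hvu : v.length = u.length) : c v = c' v := by
  obtain ⟨u', hu'⟩ : c u ∈ Set.range c' := (h.subset ⟨⟨u, rfl⟩, hu⟩).1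
  rw [range_inter_level hu, range_inter_level (hu'.symm ▸ hu)] at h
  have hlen : u.length = u'.length := by
    have hcard := congrArg (fun S : Set (List Bool) => Nat.card S) h
    simp only [Nat.card_range_of_injective (strictMono_level _ _).injective, card_level] at hcard
    exact Nat.pow_right_injective le_rfl hcard
  rw [← hlen] at h
  exact congrFun (((c.strictMono_level _).range_inj (c'.strictMono_level _)).1 h) ⟨v, hvu⟩

theorem apply_eq_of_range_inter_level_eq_of_le
    (h : Set.range c ∩ {z | z.length = n} = Set.range c' ∩ {z | z.length = n})
    (hu : (c u).length = n) (hvu : v.length ≤ u.length) : c v = c' v := by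
  obtain hvu | hvu := hvu.eq_or_lt
  · exact apply_eq_of_range_inter_level_eq h hu hvu
  obtain ⟨w, hw⟩ : ∃ w : List Bool, ∀ b, (v ++ b :: w).length = u.length :=
    ⟨List.replicate (u.length - (v.length + 1)) false, fun b => by simp; omega⟩
  have heq (b : Bool) : c (v ++ b :: w) = c' (v ++ b :: w) :=
    apply_eq_of_range_inter_level_eq h hu (hw b)
  have hprefix (d : StrongEmbedding) (b : Bool) : d v ++ [b] <+: d (v ++ b :: w) :=
    d.map_concat_prefix ⟨w, by simp⟩
  exact fork_unique (hprefix c false) (hprefix c true)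
    (heq false ▸ hprefix c' false) (heq true ▸ hprefix c' true)

theorem measurable_tree : Measurable tree := by
  refine Measurable.subtype_mk (measurable_set_iff.2 fun b => measurableSet_setOfPred.1 ?_)
  refine RamseyMonoid.EllentuckOpen.completelyRamsey ?_
  rintro e ⟨u, rfl⟩
  exact ⟨u.length + 1, fun g hg => ⟨u, congrArg e (hg u (Nat.lt_succ_self _))⟩⟩

end StrongEmbedding

theorem measurable_below : Measurable below :=
  measurable_set_iff.2 fun _ => Measurable.exists fun a =>
    (measurable_set_mem a).and measurable_const

namespace StrongEmbedding

open RamseyMonoid (Decides CompletelyRamsey DenseHereditary exists_fusion)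

variable {e g c c' : StrongEmbedding} {u : List Bool} {n : ℕ}

theorem exists_eq_tree_mul {A : Sinf} (h : A.1 ⊆ e.tree.1) : ∃ c, A = (e * c).tree := by
  obtain ⟨a, rfl⟩ := tree_surjective A
  exact (exists_eq_mul_of_range_subset h).imp fun _ => congrArg tree

theorem approxT_range_mul (e : StrongEmbedding) (hg : g ∈ fix n) :
    approxT (Set.range (e * g)) n = approxT (Set.range e) n := by
  rw [approxT_range, approxT_range]
  exact Set.image_congr fun u hu => congrArg e (hg u hu)

theorem range_mul_inter_lvlSet (e c : StrongEmbedding) (n : ℕ) :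
    Set.range (e * c) ∩ lvlSet (Set.range e) n = e '' (Set.range c ∩ {u | u.length = n}) := by
  rw [lvlSet_range, Set.image_inter e.injective, ← Set.range_comp]
  rfl

theorem denseHereditary_forall_apply {P : List Bool → StrongEmbedding → Prop}
    (hP : ∀ a, DenseHereditary n (P a)) :
    DenseHereditary n (fun e => ∀ b : List Bool, b.length < n → P (e b) e) where
  dense x := by
    obtain ⟨g, hg, h⟩ := (DenseHereditary.forall_mem (List.finite_length_lt Bool n)
      fun b _ => hP (x b)).dense x
    exact ⟨g, hg, fun b hb => by rw [mul_apply, hg b hb]; exact h b hb⟩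
  hereditary {x g} hx hg b hb := by
    rw [mul_apply, hg b hb]
    exact (hP _).hereditary (hx b hb) hg

theorem exists_fusion_decides {X : List Bool → Set StrongEmbedding}
    (hX : ∀ a, CompletelyRamsey (X a)) (n : ℕ) (x : StrongEmbedding) :
    ∃ g ∈ fix n, ∀ m ≥ n, ∀ b : List Bool, b.length < m → ∀ k ≤ m, ∀ h ∈ tight k m,
      Decides (X ((x * g) b)) k (x * g * h) :=
  exists_fusion (fun m _ => denseHereditary_forall_apply fun a =>
    DenseHereditary.forall_mem (Set.finite_Iic m) fun k _ =>
      ((hX a).denseHereditary k).forall_tight m) x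

theorem mul_mem_iff_of_range_inter_level_eq {Y : Set StrongEmbedding}
    (hdec : ∀ k ≤ n + 1, ∀ h ∈ tight k (n + 1), Decides Y k (e * h))
    (h : Set.range c ∩ {z | z.length = n} = Set.range c' ∩ {z | z.length = n})
    (hu : (c u).length = n) : e * c ∈ Y ↔ e * c' ∈ Y := by
  have htrunc : trunc u.length c = trunc u.length c' :=
    trunc_congr fun v hv => apply_eq_of_range_inter_level_eq_of_le h hu hv
  have hheight : c.height u.length = n := (c.length_apply u).symm.trans hu
  have hle : u.length ≤ n := hheight ▸ c.height_strictMono.le_apply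
  have hmem : trunc u.length c ∈ tight (u.length + 1) (n + 1) :=
    hheight ▸ trunc_mem_tight u.length 1 c
  obtain ⟨d, hd, hc⟩ := exists_eq_trunc_mul u.length c
  obtain ⟨d', hd', hc'⟩ := exists_eq_trunc_mul u.length c'
  rw [hc, hc', ← htrunc, ← mul_assoc, ← mul_assoc]
  exact (hdec _ (Nat.succ_le_succ hle) _ hmem).mem_iff hd hd'

end StrongEmbedding

open StrongEmbedding in
theorem milliken_traciality_general (F : Sinf → Set (List Bool)) (hF : Measurable F)
    (s : Set (List Bool)) (D : Sinf) (hne : (cubeT s D).Nonempty) :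
    ∃ B₀ ∈ cubeT s D, ∃ n₀ : ℕ, ∀ n ≥ n₀, ∀ A A' : Sinf,
      A.1 ⊆ B₀.1 → A'.1 ⊆ B₀.1 →
      A.1 ∩ lvlSet B₀.1 (n - 1) = A'.1 ∩ lvlSet B₀.1 (n - 1) →
      (A.1 ∩ lvlSet B₀.1 (n - 1)).Nonempty →
      F A ∩ lvlSet B₀.1 (n - 1) = F A' ∩ lvlSet B₀.1 (n - 1) := by
  obtain ⟨B, ⟨N, rfl⟩, hBD⟩ := hne
  obtain ⟨x, rfl⟩ := tree_surjective B
  have hX (a : List Bool) : RamseyMonoid.CompletelyRamsey {e : StrongEmbedding | a ∈ F e.tree} :=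
    measurableSet_setOfPred.2 (measurable_set_iff.1 (hF.comp measurable_tree) a)
  obtain ⟨g, hg, hdec⟩ := exists_fusion_decides hX N x
  refine ⟨(x * g).tree, ⟨⟨N, (approxT_range_mul x hg).symm⟩,
    (Set.range_comp_subset_range g x).trans hBD⟩, N + 1, fun n hn A A' hA hA' heq hne => ?_⟩
  obtain ⟨n, rfl⟩ := Nat.exists_eq_add_of_le' (Nat.one_le_of_lt hn)
  obtain ⟨c, rfl⟩ := exists_eq_tree_mul hA
  obtain ⟨c', rfl⟩ := exists_eq_tree_mul hA'
  simp only [tree, Nat.add_sub_cancel, range_mul_inter_lvlSet, Set.image_nonempty] at heq hne ⊢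
  obtain ⟨_, ⟨u, rfl⟩, hu⟩ := hne
  rw [lvlSet_range]
  ext a
  refine and_congr_left ?_
  rintro ⟨b, hb, rfl⟩
  exact mul_mem_iff_of_range_inter_level_eq (hdec _ (Nat.le_of_succ_le_succ hn |>.step) b
    (Nat.lt_succ_of_le hb.le)) ((x * g).injective.image_injective heq) hu

/-- The traciality step in the proof of Lemma 7.2: given a Borel `f` and a nonempty cube
`[s, D]`, there are `B₀ ∈ [s, D]` and `n₀` such that for all `n ≥ n₀` and all `A, A' ≤ B₀`
with `A ∩ B₀(n−1) = A' ∩ B₀(n−1) ≠ ∅`, one has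
`⟨f(A)⟩ ∩ B₀(n−1) = ⟨f(A')⟩ ∩ B₀(n−1)`. -/
theorem milliken_traciality (f : Sinf → Sinf) (hf : Measurable f)
    (s : Set (List Bool)) (D : Sinf) (hne : (cubeT s D).Nonempty) :
    ∃ B₀ ∈ cubeT s D, ∃ n₀ : ℕ, ∀ n ≥ n₀, ∀ A A' : Sinf,
      A.1 ⊆ B₀.1 → A'.1 ⊆ B₀.1 →
      A.1 ∩ lvlSet B₀.1 (n - 1) = A'.1 ∩ lvlSet B₀.1 (n - 1) →
      (A.1 ∩ lvlSet B₀.1 (n - 1)).Nonempty →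
      below (f A).1 ∩ lvlSet B₀.1 (n - 1) = below (f A').1 ∩ lvlSet B₀.1 (n - 1) :=
  milliken_traciality_general (fun A => below (f A).1)
    (measurable_below.comp (measurable_subtype_coe.comp hf)) s D hne
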